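/- arXiv:2405.12064 — 3 statements merged into one kernel-verified Lean document; each statement's English description precedes it below -/
import Mathlib

section
/- Fix half-bandwidths W⁰, W¹ ∈ (0, 1/2), let 𝕎 = [−W⁰, W⁰] × [−W¹, W¹], and fix ε ∈ (0, 1/(4W⁰W¹) − 1). Then there exist constants C̄₃ > 0, C̄₄ > 0 and integers M̄₂, N̄₂ ≥ 1 (depending only on W⁰, W¹ and ε) such that for all M ≥ M̄₂, N ≥ N̄₂ and every index p with ⌈4MN·W⁰·W¹·(1+ε)⌉ ≤ p ≤ MN−1, the p-th eigenvalue satisfies λ_{(M,N),𝕎}^{(p)} ≤ C̄₃·e^{−C̄₄·min(M,N)}. -/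
open MeasureTheory Matrix Real Set

/-- The 2-D prolate matrix `B_{(M,N),𝕎}`, indexed by pairs, with entries
`∫_𝕎 exp(2πi (f (m−p) + g (n−q))) df dg`. -/
noncomputable def prolate2D (M N : ℕ) (𝕎 : Set (ℝ × ℝ)) :
    Matrix (Fin M × Fin N) (Fin M × Fin N) ℂ :=
  fun i j => ∫ fg in 𝕎,
    Complex.exp (2 * (Real.pi : ℂ) * Complex.I *
      ((fg.1 : ℂ) * (((i.1 : ℕ) : ℂ) - ((j.1 : ℕ) : ℂ)) +
       (fg.2 : ℂ) * (((i.2 : ℕ) : ℂ) - ((j.2 : ℕ) : ℂ))))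

/-!
The matrix of a rectangle is the Kronecker product of two one-dimensional prolate matrices. Its
eigenvalues are the pairwise products of theirs, which are bounded, so a product can only fail to be
small if both factors do. It therefore suffices to show that, for an arc of length `ℓ` and `ρ > ℓ`,
all but `ρ M` of the `M` one-dimensional eigenvalues are exponentially small.

The one-dimensional quadratic form integrates `|p|²` over the arc, where `p` is the polynomial of
degree `< M` with the given coefficients. Take `L` slightly larger than `M`, and let `p` vanish at
the roughly `ℓ L` of the `L`-th roots of unity that lie on or near the arc. For `z` on the arc,
multiply `p` by a power of the Dirichlet kernel centred at `z`: the product has degree `< L`, agrees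
with `p` at `z`, vanishes at the near roots and is exponentially small at all the others, so
interpolation at the `L`-th roots of unity makes `p z` exponentially small. Hence the quadratic form
is exponentially small on a subspace of codimension about `ℓ L`.
-/

open scoped FourierTransform Kronecker ComplexOrder

section DirichletKernel

open Polynomial

/-- The polynomial `k⁻¹ ∑_{a < k} (X / w)^a`, a Dirichlet kernel centred at `w` and normalized to
take the value `1` there. It serves as a Lagrange basis polynomial on the `k`-th roots of `w ^ k`
and, raised to a power, as a polynomial that is tiny on the circle away from `w`. -/
noncomputable def dirichletPoly (k : ℕ) (w : Circle) : ℂ[X] :=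
  C (k : ℂ)⁻¹ * ∑ a ∈ Finset.range k, (C (w : ℂ)⁻¹ * X) ^ a

variable {k : ℕ} {w z : Circle}

lemma eval_dirichletPoly (k : ℕ) (w : Circle) (z : ℂ) :
    (dirichletPoly k w).eval z = (k : ℂ)⁻¹ * ∑ a ∈ Finset.range k, (z / w) ^ a := by
  simp [dirichletPoly, eval_finsetSum, div_eq_inv_mul]

lemma eval_dirichletPoly_self (hk : k ≠ 0) (w : Circle) : (dirichletPoly k w).eval ↑w = 1 := by
  simp [eval_dirichletPoly, hk]

lemma eval_dirichletPoly_of_ne (k : ℕ) (h : z ≠ w) :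
    (dirichletPoly k w).eval ↑z = (k : ℂ)⁻¹ * (((z / w : ℂ) ^ k - 1) / (z / w - 1)) := by
  have hzw : (z / w : ℂ) ≠ 1 := by simpa [div_eq_one_iff_eq, Circle.coe_inj] using h
  rw [eval_dirichletPoly, geom_sum_eq hzw]

lemma eval_dirichletPoly_eq_zero (h : z ≠ w) (hpow : z ^ k = w ^ k) :
    (dirichletPoly k w).eval ↑z = 0 := by
  have hpow' : (z : ℂ) ^ k = (w : ℂ) ^ k := mod_cast congrArg ((↑) : Circle → ℂ) hpow
  simp [eval_dirichletPoly_of_ne k h, div_pow, hpow']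

lemma norm_eval_dirichletPoly_le_one (k : ℕ) (w z : Circle) :
    ‖(dirichletPoly k w).eval ↑z‖ ≤ 1 := by
  have hsum : ‖∑ a ∈ Finset.range k, (z / w : ℂ) ^ a‖ ≤ k :=
    (norm_sum_le _ _).trans_eq (by simp [Circle.norm_coe])
  rw [eval_dirichletPoly, norm_mul, norm_inv, Complex.norm_natCast]
  exact (mul_le_mul_of_nonneg_left hsum (by positivity)).trans inv_mul_le_one

lemma norm_eval_dirichletPoly_le (k : ℕ) (h : z ≠ w) :
    ‖(dirichletPoly k w).eval ↑z‖ ≤ 2 / (k * ‖(z - w : ℂ)‖) := by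
  have hnum : ‖(z / w : ℂ) ^ k - 1‖ ≤ 2 :=
    (norm_sub_le _ _).trans_eq (by simp [Circle.norm_coe, one_add_one_eq_two])
  have hden : ‖(z / w - 1 : ℂ)‖ = ‖(z - w : ℂ)‖ := by
    rw [div_sub_one w.coe_ne_zero, norm_div, Circle.norm_coe, div_one]
  rw [eval_dirichletPoly_of_ne k h, norm_mul, norm_inv, norm_div, Complex.norm_natCast, hden,
    inv_mul_eq_div, div_div, mul_comm (‖_‖) (k : ℝ)]
  gcongr

lemma natDegree_dirichletPoly_lt (hk : k ≠ 0) (w : Circle) :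
    (dirichletPoly k w).natDegree < k := by
  have hterm : ∀ a ∈ Finset.range k, ((C (w : ℂ)⁻¹ * X) ^ a).natDegree ≤ k - 1 := fun a ha => by
    have := natDegree_pow_le_of_le a (natDegree_C_mul_le (w : ℂ)⁻¹ X)
    rw [natDegree_X, mul_one] at this
    exact this.trans (Nat.le_sub_one_of_lt (Finset.mem_range.1 ha))
  have := (natDegree_C_mul_le (k : ℂ)⁻¹ _).trans (natDegree_sum_le_of_forall_le _ _ hterm)
  rw [dirichletPoly]
  omega

variable {s : Finset Circle} {u : Circle} {p : ℂ[X]}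

lemma eq_sum_eval_mul_dirichletPoly (hs : ∀ w ∈ s, w ^ s.card = u) (hp : p.natDegree < s.card) :
    p = ∑ w ∈ s, C (p.eval ↑w) * dirichletPoly s.card w := by
  have hcard : s.card ≠ 0 := by omega
  refine eq_of_degrees_lt_of_eval_index_eq s Circle.coe_injective.injOn
    (degree_le_natDegree.trans_lt (mod_cast hp)) ?_ fun z hz => ?_
  · refine (degree_sum_le _ _).trans_lt ((Finset.sup_lt_iff (WithBot.bot_lt_coe _)).2 fun w _ => ?_)
    have hdeg := (natDegree_C_mul_le (p.eval ↑w) _).trans_lt (natDegree_dirichletPoly_lt hcard w)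
    exact degree_le_natDegree.trans_lt (mod_cast hdeg)
  · simp only [eval_finsetSum, eval_mul, eval_C]
    rw [Finset.sum_eq_single_of_mem z hz fun w hw hwz => ?_, eval_dirichletPoly_self hcard, mul_one]
    rw [eval_dirichletPoly_eq_zero hwz.symm ((hs z hz).trans (hs w hw).symm), mul_zero]

lemma norm_eval_le_sum_norm_eval (hs : ∀ w ∈ s, w ^ s.card = u) (hp : p.natDegree < s.card)
    (z : Circle) : ‖p.eval ↑z‖ ≤ ∑ w ∈ s, ‖p.eval ↑w‖ := by
  conv_lhs => rw [eq_sum_eval_mul_dirichletPoly hs hp]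
  simp only [eval_finsetSum, eval_mul, eval_C]
  refine norm_sum_le_of_le _ fun w _ => ?_
  rw [norm_mul]
  exact mul_le_of_le_one_right (norm_nonneg _) (norm_eval_dirichletPoly_le_one _ _ _)

-- The bound `norm_eval_le_sum_norm_eval` is applied to `p * dirichletPoly k z ^ r`, which agrees
-- with `p` at `z`.
lemma norm_eval_le_of_eval_eq_zero_or_le_norm_sub {r : ℕ} {δ A : ℝ} (hk : k ≠ 0) (hδ : 0 < δ)
    (hs : ∀ w ∈ s, w ^ s.card = u) (hp : p.natDegree + r * k < s.card)
    (hA : ∀ w ∈ s, ‖p.eval ↑w‖ ≤ A)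
    (hz : ∀ w ∈ s, p.eval ↑w = 0 ∨ δ ≤ ‖(w - z : ℂ)‖) :
    ‖p.eval ↑z‖ ≤ s.card * ((2 / (k * δ)) ^ r * A) := by
  have hdeg : (p * dirichletPoly k z ^ r).natDegree < s.card := by
    have := natDegree_mul_le (p := p) (q := dirichletPoly k z ^ r)
    have := natDegree_pow_le_of_le r (natDegree_dirichletPoly_lt hk z).le
    omega
  have hnode : ∀ w ∈ s, ‖(p * dirichletPoly k z ^ r).eval ↑w‖ ≤ (2 / (k * δ)) ^ r * A := by
    intro w hw
    rw [eval_mul, eval_pow, norm_mul, norm_pow, mul_comm]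
    have hA0 : 0 ≤ A := (norm_nonneg _).trans (hA w hw)
    rcases hz w hw with h0 | hfar
    · rw [h0, norm_zero, mul_zero]
      positivity
    · have hwz : w ≠ z := by
        rintro rfl
        simp [hδ.not_ge] at hfar
      have hkernel : ‖(dirichletPoly k z).eval ↑w‖ ≤ 2 / (k * δ) :=
        (norm_eval_dirichletPoly_le k hwz).trans (by gcongr)
      gcongr
      exact hA w hw
  calc ‖p.eval ↑z‖ = ‖(p * dirichletPoly k z ^ r).eval ↑z‖ := by
        rw [eval_mul, eval_pow, eval_dirichletPoly_self hk, one_pow, mul_one]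
    _ ≤ ∑ w ∈ s, ‖(p * dirichletPoly k z ^ r).eval ↑w‖ := norm_eval_le_sum_norm_eval hs hdeg z
    _ ≤ s.card * ((2 / (k * δ)) ^ r * A) := by
        simpa only [nsmul_eq_mul] using Finset.sum_le_card_nsmul _ _ _ hnode

end DirichletKernel

section FourierNodes

lemma norm_fourierChar_sub (s t : ℝ) : ‖(𝐞 s - 𝐞 t : ℂ)‖ = 2 * |sin (π * (s - t))| := by
  have hfactor : (𝐞 s - 𝐞 t : ℂ) = 𝐞 t * (Complex.exp (Complex.I * ↑(2 * π * (s - t))) - 1) := by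
    simp only [Real.fourierChar_apply, mul_sub, mul_one, ← Complex.exp_add]
    push_cast
    ring_nf
  rw [hfactor, norm_mul, Circle.norm_coe, one_mul, Complex.norm_exp_I_mul_ofReal_sub_one,
    norm_mul, Real.norm_eq_abs, Real.norm_eq_abs, abs_two]
  ring_nf

lemma two_mul_le_sin_pi_mul {δ x : ℝ} (hδ : 0 ≤ δ) (h₁ : δ ≤ x) (h₂ : x ≤ 1 - δ) :
    2 * δ ≤ sin (π * x) := by
  wlog hx : x ≤ 1 / 2 generalizing x
  · have := this (x := 1 - x) (by linarith) (by linarith) (by linarith)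
    rwa [mul_sub, mul_one, sin_pi_sub] at this
  calc 2 * δ ≤ 2 / π * (π * x) := by field_simp; linarith
    _ ≤ sin (π * x) :=
      Real.mul_le_sin (mul_nonneg pi_pos.le (hδ.trans h₁)) (by nlinarith [pi_pos])

lemma four_mul_le_norm_fourierChar_sub {δ s t : ℝ} (hδ : 0 ≤ δ) (h₁ : δ ≤ s - t)
    (h₂ : s - t ≤ 1 - δ) : 4 * δ ≤ ‖(𝐞 s - 𝐞 t : ℂ)‖ := by
  have hsin := two_mul_le_sin_pi_mul hδ h₁ h₂
  rw [norm_fourierChar_sub]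
  linarith [le_abs_self (sin (π * (s - t)))]

/-- The node `e^{-2πi(a + j/L)}`. For `j < L` these are the `L`-th roots of `e^{-2πiLa}`; the sign
in the exponent is the one with which a coefficient vector `x` is sampled at the frequency
`a + j / L`. -/
noncomputable def fourierNode (L : ℕ) (a : ℝ) (j : ℕ) : Circle :=
  𝐞 (-(a + j / L))

variable {L : ℕ}

lemma fourierNode_pow (hL : L ≠ 0) (a : ℝ) (j : ℕ) : fourierNode L a j ^ L = 𝐞 (-(L * a)) := by
  have hint : 𝐞 (-(j : ℝ)) = 1 := by
    rw [Real.fourierChar_apply', Circle.exp_eq_one]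
    exact ⟨-j, by push_cast; ring⟩
  have hexp : L • (-(a + j / L) : ℝ) = -(L * a) + -(j : ℝ) := by
    simp only [nsmul_eq_mul]
    field_simp
    ring
  rw [fourierNode, ← AddChar.map_nsmul_eq_pow, hexp, AddChar.map_add_eq_mul, hint, mul_one]

lemma injOn_fourierNode (L : ℕ) (a : ℝ) : Set.InjOn (fourierNode L a) (Finset.range L) := by
  suffices ∀ i j : ℕ, i < j → j < L → fourierNode L a i ≠ fourierNode L a j by
    intro i hi j hj hij
    simp only [Finset.coe_range, Set.mem_Iio] at hi hj
    rcases lt_trichotomy i j with h | h | h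
    exacts [absurd hij (this i j h hj), h, absurd hij.symm (this j i h hi)]
  intro i j hij hj heq
  have hL : (0 : ℝ) < L := by exact_mod_cast (i.zero_le.trans_lt hij).trans hj
  have hij' : (i + 1 : ℝ) ≤ j := by exact_mod_cast hij
  have hj' : (j + 1 : ℝ) ≤ L := by exact_mod_cast hj
  have hsep := four_mul_le_norm_fourierChar_sub (δ := 1 / L) (s := -(a + i / L))
    (t := -(a + j / L)) (by positivity) (by field_simp; linarith) (by field_simp; linarith)
  change 4 * (1 / (L : ℝ)) ≤ ‖(fourierNode L a i - fourierNode L a j : ℂ)‖ at hsep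
  rw [heq, sub_self, norm_zero] at hsep
  exact hsep.not_gt (by positivity)

/-- The indices `j < L` for which `fourierNode L a j` lies within `1 / k` of a turn from the arc of
points `e^{-2πif}` with `a ≤ f ≤ a + ℓ`. The condition does not depend on `a`. -/
noncomputable def nearNodes (L k : ℕ) (ℓ : ℝ) : Finset ℕ :=
  {j ∈ Finset.range L | (j : ℝ) ≤ (ℓ + 1 / k) * L ∨ (1 - 1 / k) * L ≤ (j : ℝ)}

lemma card_filter_range_le_or_ge_le {X Y : ℝ} (hX : 0 ≤ X) (hY : Y ≤ L) :
    (({j ∈ Finset.range L | (j : ℝ) ≤ X ∨ Y ≤ j} : Finset ℕ).card : ℝ) ≤ X + (L - Y) + 1 := by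
  have hsub : ({j ∈ Finset.range L | (j : ℝ) ≤ X ∨ Y ≤ j} : Finset ℕ) ⊆
      Finset.range (⌊X⌋₊ + 1) ∪ Finset.Ico ⌈Y⌉₊ L := by
    intro j hj
    simp only [Finset.mem_filter, Finset.mem_range, Finset.mem_union, Finset.mem_Ico] at hj ⊢
    rcases hj.2 with h | h
    · exact .inl (Nat.lt_succ_of_le (Nat.le_floor h))
    · exact .inr ⟨Nat.ceil_le.2 h, hj.1⟩
  have hcard := (Finset.card_le_card hsub).trans (Finset.card_union_le _ _)
  rw [Finset.card_range, Nat.card_Ico] at hcard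
  have hceil : ⌈Y⌉₊ ≤ L := Nat.ceil_le.2 hY
  have hcard' : (({j ∈ Finset.range L | (j : ℝ) ≤ X ∨ Y ≤ j} : Finset ℕ).card : ℝ) ≤
      ⌊X⌋₊ + 1 + (L - ⌈Y⌉₊) := by exact_mod_cast hcard
  linarith [Nat.floor_le hX, Nat.le_ceil Y]

lemma card_nearNodes_le (L k : ℕ) {ℓ : ℝ} (hℓ : 0 ≤ ℓ) :
    ((nearNodes L k ℓ).card : ℝ) ≤ (ℓ + 2 / k) * L + 1 := by
  have hY : (1 - 1 / k : ℝ) * L ≤ L :=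
    mul_le_of_le_one_left L.cast_nonneg (sub_le_self _ (by positivity))
  have hX : 0 ≤ (ℓ + 1 / k) * L := by positivity
  calc ((nearNodes L k ℓ).card : ℝ) ≤ (ℓ + 1 / k) * L + (L - (1 - 1 / k) * L) + 1 :=
        card_filter_range_le_or_ge_le hX hY
    _ = (ℓ + 2 / k) * L + 1 := by ring

-- At the nodes that are not near, the `r`-th power of the kernel contributes a factor `2⁻ʳ`.
lemma norm_eval_le_of_eval_nearNodes_eq_zero {k r : ℕ} {a b f A : ℝ} {p : Polynomial ℂ}
    (hk : k ≠ 0) (hf : f ∈ Icc a b) (hp : p.natDegree + r * k < L)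
    (hA : ∀ z : Circle, ‖p.eval ↑z‖ ≤ A)
    (hzero : ∀ j ∈ nearNodes L k (b - a), p.eval ↑(fourierNode L a j) = 0) :
    ‖p.eval ↑(𝐞 (-f))‖ ≤ L * ((1 / 2) ^ r * A) := by
  classical
  have hk' : (0 : ℝ) < k := by positivity
  have hcard : ((Finset.range L).image (fourierNode L a)).card = L := by
    rw [Finset.card_image_of_injOn (injOn_fourierNode L a), Finset.card_range]
  have hpow : ∀ w ∈ (Finset.range L).image (fourierNode L a), w ^ L = 𝐞 (-(L * a)) :=
    Finset.forall_mem_image.2 fun j _ => fourierNode_pow (by omega) a j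
  have hbound := norm_eval_le_of_eval_eq_zero_or_le_norm_sub (z := 𝐞 (-f)) (δ := 4 / k)
    hk (by positivity) (by rwa [hcard]) (by rwa [hcard]) (fun w _ => hA w)
    (Finset.forall_mem_image.2 fun j hj => ?_)
  · rwa [hcard, mul_div_cancel₀ _ hk'.ne', show (2 / 4 : ℝ) = 1 / 2 by norm_num] at hbound
  refine or_iff_not_imp_left.2 fun hne => ?_
  have hfar : j ∉ nearNodes L k (b - a) := fun h => hne (hzero j h)
  have hL : (0 : ℝ) < L := by exact_mod_cast (Nat.zero_le _).trans_lt hp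
  simp only [nearNodes, Finset.mem_filter, hj, true_and, not_or, not_le, ← lt_div_iff₀ hL,
    ← div_lt_iff₀ hL] at hfar
  rw [norm_sub_rev, ← mul_one_div (4 : ℝ)]
  exact four_mul_le_norm_fourierChar_sub (by positivity) (by linarith [hf.2]) (by linarith [hf.1])

end FourierNodes

section SpectralCounting

variable {𝕜 n : Type*} [RCLike 𝕜] [Fintype n]

lemma star_mulVec_dotProduct_mulVec_mulVec (U : Matrix n n 𝕜) (A : Matrix n n 𝕜) (y : n → 𝕜) :
    star (U *ᵥ y) ⬝ᵥ A *ᵥ (U *ᵥ y) = star y ⬝ᵥ (star U * A * U) *ᵥ y := by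
  rw [star_mulVec, ← dotProduct_mulVec, mulVec_mulVec, mulVec_mulVec, star_eq_conjTranspose,
    Matrix.mul_assoc]

variable [DecidableEq n] {A : Matrix n n 𝕜}

lemma re_star_dotProduct_diagonal_mulVec (d : n → ℝ) (y : n → 𝕜) :
    RCLike.re (star y ⬝ᵥ diagonal (RCLike.ofReal ∘ d : n → 𝕜) *ᵥ y) = ∑ i, d i * ‖y i‖ ^ 2 := by
  simp only [dotProduct, mulVec_diagonal, map_sum, Pi.star_apply, Function.comp_apply]
  refine Finset.sum_congr rfl fun i _ => ?_
  rw [mul_left_comm, RCLike.star_def, RCLike.conj_mul]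
  norm_cast

lemma re_star_dotProduct_mulVec_eigenvectorUnitary (hA : A.IsHermitian) (y : n → 𝕜) :
    RCLike.re (star ((hA.eigenvectorUnitary : Matrix n n 𝕜) *ᵥ y) ⬝ᵥ
      A *ᵥ ((hA.eigenvectorUnitary : Matrix n n 𝕜) *ᵥ y)) =
      ∑ i, hA.eigenvalues i * ‖y i‖ ^ 2 := by
  have hdiag := hA.conjStarAlgAut_star_eigenvectorUnitary
  rw [Unitary.conjStarAlgAut_star_apply] at hdiag
  rw [star_mulVec_dotProduct_mulVec_mulVec, hdiag, re_star_dotProduct_diagonal_mulVec]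

lemma sum_norm_sq_mulVec_of_mem_unitary (U : unitary (Matrix n n 𝕜)) (y : n → 𝕜) :
    ∑ i, ‖((U : Matrix n n 𝕜) *ᵥ y) i‖ ^ 2 = ∑ i, ‖y i‖ ^ 2 := by
  have hone (z : n → 𝕜) : ∑ i, ‖z i‖ ^ 2 = RCLike.re (star z ⬝ᵥ (1 : Matrix n n 𝕜) *ᵥ z) := by
    simpa [Function.comp_def] using (re_star_dotProduct_diagonal_mulVec (fun _ => 1) z).symm
  rw [hone, hone, star_mulVec_dotProduct_mulVec_mulVec, Matrix.mul_one, Unitary.coe_star_mul_self]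

variable {V : Type*} [AddCommGroup V] [Module 𝕜 V] [FiniteDimensional 𝕜 V]

-- Otherwise some nonzero combination of the eigenvectors with eigenvalue above `η` lies in the
-- kernel of `l`.
lemma card_lt_eigenvalues_le_finrank (hA : A.IsHermitian) (l : (n → 𝕜) →ₗ[𝕜] V) {η : ℝ}
    (hl : ∀ x, l x = 0 → RCLike.re (star x ⬝ᵥ A *ᵥ x) ≤ η * ∑ i, ‖x i‖ ^ 2) :
    Finset.card {i | η < hA.eigenvalues i} ≤ Module.finrank 𝕜 V := by
  by_contra! hlt
  let U : Matrix n n 𝕜 := hA.eigenvectorUnitary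
  let restrict := LinearMap.funLeft 𝕜 𝕜 (Subtype.val : {i // ¬η < hA.eigenvalues i} → n)
  have hdim : Module.finrank 𝕜 (V × ({i // ¬η < hA.eigenvalues i} → 𝕜)) <
      Module.finrank 𝕜 (n → 𝕜) := by
    have := Fintype.card_subtype_compl (fun i => η < hA.eigenvalues i)
    have := Fintype.card_subtype_le (fun i => η < hA.eigenvalues i)
    rw [Module.finrank_prod, Module.finrank_fintype_fun_eq_card,
      Module.finrank_fintype_fun_eq_card]
    rw [← Fintype.card_subtype] at hlt
    omega
  obtain ⟨y, hy, hy0⟩ := Submodule.exists_mem_ne_zero_of_ne_bot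
    (LinearMap.ker_ne_bot_of_finrank_lt (f := (l ∘ₗ U.mulVecLin).prod restrict) hdim)
  obtain ⟨hker, hrestrict⟩ : l (U *ᵥ y) = 0 ∧ restrict y = 0 := by simpa using hy
  have hsupp : ∀ i, y i ≠ 0 → η < hA.eigenvalues i := fun i hi =>
    not_not.1 fun h => hi (congrFun hrestrict ⟨i, h⟩)
  obtain ⟨i₀, hi₀⟩ := Function.ne_iff.1 hy0
  have hgt : ∑ i, η * ‖y i‖ ^ 2 < ∑ i, hA.eigenvalues i * ‖y i‖ ^ 2 := by
    refine Finset.sum_lt_sum (fun i _ => ?_) ⟨i₀, Finset.mem_univ _, ?_⟩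
    · rcases eq_or_ne (y i) 0 with h | h
      · simp [h]
      · exact mul_le_mul_of_nonneg_right (hsupp i h).le (sq_nonneg _)
    · exact mul_lt_mul_of_pos_right (hsupp i₀ hi₀) (by positivity [norm_pos_iff.2 hi₀])
  have hle := hl _ hker
  rw [re_star_dotProduct_mulVec_eigenvectorUnitary, sum_norm_sq_mulVec_of_mem_unitary,
    Finset.mul_sum] at hle
  exact hgt.not_ge hle

lemma eigenvalues_le_of_re_star_dotProduct_mulVec_le (hA : A.IsHermitian) {K : ℝ}
    (hK : ∀ x, RCLike.re (star x ⬝ᵥ A *ᵥ x) ≤ K * ∑ i, ‖x i‖ ^ 2) (i : n) :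
    hA.eigenvalues i ≤ K := by
  have hcard := card_lt_eigenvalues_le_finrank hA (0 : (n → 𝕜) →ₗ[𝕜] (Fin 0 → 𝕜)) fun x _ => hK x
  rw [Module.finrank_fin_fun, Nat.le_zero, Finset.card_eq_zero, Finset.filter_eq_empty_iff] at hcard
  exact not_lt.1 (hcard (Finset.mem_univ i))

end SpectralCounting

section Kronecker

variable {𝕜 m n : Type*} [RCLike 𝕜] [Fintype m] [Fintype n]

lemma card_lt_mul_le_card_lt_mul_card_lt {f : m → ℝ} {g : n → ℝ} {K α β η : ℝ}
    (hf₀ : ∀ i, 0 ≤ f i) (hg₀ : ∀ j, 0 ≤ g j) (hf : ∀ i, f i ≤ K) (hg : ∀ j, g j ≤ K)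
    (hα : K * α ≤ η) (hβ : K * β ≤ η) :
    Finset.card {i : m × n | η < f i.1 * g i.2} ≤
      Finset.card {i | α < f i} * Finset.card {j | β < g j} := by
  rw [← Finset.card_product]
  refine Finset.card_le_card fun ⟨i, j⟩ hij => ?_
  simp only [Finset.mem_product, Finset.mem_filter_univ] at hij ⊢
  refine ⟨lt_of_not_ge fun hi => hij.not_ge ?_, lt_of_not_ge fun hj => hij.not_ge ?_⟩
  · calc f i * g j ≤ f i * K := mul_le_mul_of_nonneg_left (hg j) (hf₀ i)
      _ ≤ K * α := by nlinarith [(hf₀ i).trans (hf i)]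
      _ ≤ η := hα
  · calc f i * g j ≤ K * g j := mul_le_mul_of_nonneg_right (hf i) (hg₀ j)
      _ ≤ K * β := mul_le_mul_of_nonneg_left hj ((hf₀ i).trans (hf i))
      _ ≤ η := hβ

variable [DecidableEq m] [DecidableEq n]

lemma card_lt_eigenvalues_of_charpoly_eq {A : Matrix n n 𝕜} (hA : A.IsHermitian) (d : n → ℝ)
    (hd : A.charpoly = ∏ i, (Polynomial.X - Polynomial.C (d i : 𝕜))) (η : ℝ) :
    Finset.card {i | η < hA.eigenvalues i} = Finset.card {i | η < d i} := by
  have hroots : (Finset.univ.val.map fun i => (hA.eigenvalues i : 𝕜)) =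
      Finset.univ.val.map fun i => (d i : 𝕜) := by
    rw [← Polynomial.roots_multiset_prod_X_sub_C (Finset.univ.val.map fun i => (d i : 𝕜)),
      Multiset.map_map]
    exact hA.roots_charpoly_eq_eigenvalues.symm.trans (congrArg _ hd)
  have hcount := congrArg (Multiset.countP fun z => η < RCLike.re z) hroots
  simp only [Multiset.countP_map, RCLike.ofReal_re] at hcount
  exact hcount

lemma charpoly_kronecker {A : Matrix m m 𝕜} {B : Matrix n n 𝕜} (hA : A.IsHermitian)
    (hB : B.IsHermitian) :
    (A ⊗ₖ B).charpoly = ∏ i : m × n,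
      (Polynomial.X - Polynomial.C ((hA.eigenvalues i.1 * hB.eigenvalues i.2 : ℝ) : 𝕜)) := by
  have hfactor : A ⊗ₖ B = (↑hA.eigenvectorUnitary ⊗ₖ ↑hB.eigenvectorUnitary) *
      diagonal (fun i : m × n => ((hA.eigenvalues i.1 * hB.eigenvalues i.2 : ℝ) : 𝕜)) *
      (star ↑hA.eigenvectorUnitary ⊗ₖ star ↑hB.eigenvectorUnitary) := by
    conv_lhs => rw [hA.spectral_theorem, hB.spectral_theorem]
    simp only [Unitary.conjStarAlgAut_apply, mul_kronecker_mul, diagonal_kronecker_diagonal,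
      Function.comp_apply, RCLike.ofReal_mul]
  rw [hfactor, charpoly_mul_comm, ← Matrix.mul_assoc, ← mul_kronecker_mul,
    Unitary.coe_star_mul_self, Unitary.coe_star_mul_self, one_kronecker_one, Matrix.one_mul,
    charpoly_diagonal]

-- An eigenvalue `λ ν` of `A ⊗ₖ B` exceeding `η` forces both `λ` and `ν` to exceed `η / K`.
lemma card_lt_eigenvalues_kronecker_le {A : Matrix m m 𝕜} {B : Matrix n n 𝕜} (hA : A.PosSemidef)
    (hB : B.PosSemidef) (hAB : (A ⊗ₖ B).IsHermitian) {K α β η : ℝ}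
    (hAK : ∀ i, hA.isHermitian.eigenvalues i ≤ K) (hBK : ∀ j, hB.isHermitian.eigenvalues j ≤ K)
    (hα : K * α ≤ η) (hβ : K * β ≤ η) :
    Finset.card {i | η < hAB.eigenvalues i} ≤
      Finset.card {i | α < hA.isHermitian.eigenvalues i} *
        Finset.card {j | β < hB.isHermitian.eigenvalues j} := by
  rw [card_lt_eigenvalues_of_charpoly_eq hAB _ (charpoly_kronecker hA.isHermitian hB.isHermitian)]
  exact card_lt_mul_le_card_lt_mul_card_lt hA.eigenvalues_nonneg hB.eigenvalues_nonneg hAK hBK hα hβ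

end Kronecker

section Prolate1D

open Polynomial (ofFn)

/-- The one-dimensional prolate matrix of a frequency set `S`, with entries
`∫_S exp(2πi f (m − p)) df`. -/
noncomputable def prolate1D (M : ℕ) (S : Set ℝ) : Matrix (Fin M) (Fin M) ℂ :=
  fun i j => ∫ f in S, (𝐞 (f * (((i : ℕ) : ℝ) - ((j : ℕ) : ℝ))) : ℂ)

lemma prolate2D_prod (M N : ℕ) (S T : Set ℝ) :
    prolate2D M N (S ×ˢ T) = prolate1D M S ⊗ₖ prolate1D N T := by
  ext i j
  rw [kroneckerMap_apply, prolate2D, prolate1D, prolate1D, Measure.volume_eq_prod,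
    ← setIntegral_prod_mul]
  refine integral_congr_ae (.of_forall fun fg => ?_)
  simp only [Real.fourierChar_apply, ← Complex.exp_add]
  push_cast
  ring_nf

variable {M : ℕ} {S : Set ℝ}

lemma isHermitian_prolate1D (M : ℕ) (S : Set ℝ) : (prolate1D M S).IsHermitian := by
  ext i j
  rw [conjTranspose_apply, prolate1D, prolate1D, RCLike.star_def, ← integral_conj]
  refine integral_congr_ae (.of_forall fun f => ?_)
  simp only [← Circle.coe_inv_eq_conj, ← AddChar.map_neg_eq_inv]
  ring_nf

lemma integrableOn_fourierChar_mul (hS : volume S ≠ ⊤) (c : ℝ) :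
    IntegrableOn (fun f : ℝ => (𝐞 (f * c) : ℂ)) S := by
  have := Real.continuous_fourierChar
  have hcont : Continuous fun f : ℝ => (𝐞 (f * c) : ℂ) := by fun_prop
  exact .of_bound hS.lt_top hcont.aestronglyMeasurable 1
    (.of_forall fun f => (Circle.norm_coe _).le)

lemma eval_ofFn (x : Fin M → ℂ) (z : ℂ) : (ofFn M x).eval z = ∑ i, x i * z ^ (i : ℕ) := by
  simp [Polynomial.ofFn_eq_sum_monomial, Polynomial.eval_finsetSum]

lemma norm_eval_ofFn_le (x : Fin M → ℂ) (z : Circle) :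
    ‖(ofFn M x).eval (z : ℂ)‖ ≤ ∑ i, ‖x i‖ := by
  rw [eval_ofFn]
  refine norm_sum_le_of_le _ fun i _ => ?_
  rw [norm_mul, norm_pow, Circle.norm_coe, one_pow, mul_one]

lemma integrableOn_norm_sq_eval_ofFn (hS : volume S ≠ ⊤) (x : Fin M → ℂ) :
    IntegrableOn (fun f : ℝ => ‖(ofFn M x).eval (𝐞 (-f) : ℂ)‖ ^ 2) S := by
  have := Real.continuous_fourierChar
  have hcont : Continuous fun f : ℝ => ‖(ofFn M x).eval (𝐞 (-f) : ℂ)‖ ^ 2 := by fun_prop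
  refine .of_bound hS.lt_top hcont.aestronglyMeasurable ((∑ i, ‖x i‖) ^ 2) (.of_forall fun f => ?_)
  rw [norm_pow, norm_norm]
  gcongr
  exact norm_eval_ofFn_le x _

lemma norm_sq_eval_ofFn_fourierChar (x : Fin M → ℂ) (f : ℝ) :
    ((‖(ofFn M x).eval (𝐞 (-f) : ℂ)‖ ^ 2 : ℝ) : ℂ) = ∑ i, ∑ j,
      star (x i) * x j * (𝐞 (f * (((i : ℕ) : ℝ) - ((j : ℕ) : ℝ))) : ℂ) := by
  rw [Complex.ofReal_pow, ← Complex.conj_mul', eval_ofFn, map_sum, Finset.sum_mul_sum]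
  refine Finset.sum_congr rfl fun i _ => Finset.sum_congr rfl fun j _ => ?_
  have hchar : (𝐞 (f * (((i : ℕ) : ℝ) - ((j : ℕ) : ℝ))) : ℂ) =
      (starRingEnd ℂ) (𝐞 (-f) : ℂ) ^ (i : ℕ) * (𝐞 (-f) : ℂ) ^ (j : ℕ) := by
    rw [← Circle.coe_inv_eq_conj, ← AddChar.map_neg_eq_inv, ← Circle.coe_pow, ← Circle.coe_pow,
      ← Circle.coe_mul, ← AddChar.map_nsmul_eq_pow, ← AddChar.map_nsmul_eq_pow,
      ← AddChar.map_add_eq_mul]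
    simp only [nsmul_eq_mul]
    ring_nf
  rw [hchar, map_mul, map_pow, RCLike.star_def]
  ring

lemma star_dotProduct_prolate1D_mulVec (hS : volume S ≠ ⊤) (x : Fin M → ℂ) :
    star x ⬝ᵥ prolate1D M S *ᵥ x =
      ((∫ f in S, ‖(ofFn M x).eval (𝐞 (-f) : ℂ)‖ ^ 2 : ℝ) : ℂ) := by
  have hint (i j : Fin M) : IntegrableOn (fun f : ℝ =>
      star (x i) * x j * (𝐞 (f * (((i : ℕ) : ℝ) - ((j : ℕ) : ℝ))) : ℂ)) S :=
    (integrableOn_fourierChar_mul hS _).const_mul _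
  rw [← integral_complex_ofReal]
  simp only [norm_sq_eval_ofFn_fourierChar]
  rw [integral_finsetSum _ fun i _ => integrable_finsetSum _ fun j _ => hint i j]
  refine Finset.sum_congr rfl fun i _ => ?_
  rw [integral_finsetSum _ fun j _ => hint i j, mulVec, dotProduct, Finset.mul_sum]
  refine Finset.sum_congr rfl fun j _ => ?_
  rw [integral_const_mul, prolate1D, Pi.star_apply]
  ring

lemma posSemidef_prolate1D (M : ℕ) (hS : volume S ≠ ⊤) : (prolate1D M S).PosSemidef := by
  refine .of_dotProduct_mulVec_nonneg (isHermitian_prolate1D M S) fun x => ?_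
  rw [star_dotProduct_prolate1D_mulVec hS]
  exact_mod_cast integral_nonneg fun f => sq_nonneg _

lemma integral_fourierChar_mul_intCast {n : ℤ} (hn : n ≠ 0) (a : ℝ) (K : ℕ) :
    ∫ f in a..a + K, (𝐞 (f * n) : ℂ) = 0 := by
  have hc : 2 * π * Complex.I * n ≠ 0 := by simp [hn, pi_ne_zero]
  have hexp : ∀ f : ℝ, (𝐞 (f * n) : ℂ) = Complex.exp (2 * π * Complex.I * n * f) := fun f => by
    rw [Real.fourierChar_apply]
    push_cast
    ring_nf
  have hperiod : Complex.exp (2 * π * Complex.I * n * ↑(a + K)) =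
      Complex.exp (2 * π * Complex.I * n * a) := by
    refine Complex.exp_eq_exp_iff_exists_int.2 ⟨n * K, ?_⟩
    push_cast
    ring
  simp only [hexp, integral_exp_mul_complex hc, hperiod, sub_self, zero_div]

lemma prolate1D_Icc_add_natCast (M : ℕ) (a : ℝ) (K : ℕ) :
    prolate1D M (Icc a (a + K)) = (K : ℂ) • (1 : Matrix (Fin M) (Fin M) ℂ) := by
  ext i j
  rw [prolate1D, integral_Icc_eq_integral_Ioc,
    ← intervalIntegral.integral_of_le (le_add_of_nonneg_right K.cast_nonneg), Matrix.smul_apply,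
    smul_eq_mul]
  rcases eq_or_ne i j with rfl | hij
  · simp
  · have hne : (i : ℤ) - (j : ℤ) ≠ 0 := by
      simpa [sub_eq_zero, Fin.val_inj] using hij
    have := integral_fourierChar_mul_intCast hne a K
    push_cast at this
    simpa [one_apply_ne hij] using this

lemma re_star_dotProduct_prolate1D_mulVec_mono {T : Set ℝ} (hST : S ⊆ T) (hT : volume T ≠ ⊤)
    (x : Fin M → ℂ) : RCLike.re (star x ⬝ᵥ prolate1D M S *ᵥ x) ≤
      RCLike.re (star x ⬝ᵥ prolate1D M T *ᵥ x) := by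
  rw [star_dotProduct_prolate1D_mulVec (measure_ne_top_of_subset hST hT),
    star_dotProduct_prolate1D_mulVec hT]
  exact setIntegral_mono_set (integrableOn_norm_sq_eval_ofFn hT x)
    (.of_forall fun f => sq_nonneg _) hST.eventuallyLE

lemma eigenvalues_prolate1D_Icc_le {a b : ℝ} {K : ℕ} (hK : b - a ≤ K)
    (hA : (prolate1D M (Icc a b)).IsHermitian) (i : Fin M) : hA.eigenvalues i ≤ K := by
  refine eigenvalues_le_of_re_star_dotProduct_mulVec_le hA (fun x => ?_) i
  have hsub : Icc a b ⊆ Icc a (a + K) := Icc_subset_Icc_right (by linarith)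
  refine (re_star_dotProduct_prolate1D_mulVec_mono hsub (by simp) x).trans_eq ?_
  rw [prolate1D_Icc_add_natCast, smul_mulVec, one_mulVec, dotProduct_smul, dotProduct]
  simp [RCLike.conj_mul, ← Complex.ofReal_pow]

-- The sum of the moduli is bounded by Cauchy–Schwarz, which is where the factor `M` comes from.
lemma re_star_dotProduct_prolate1D_Icc_mulVec_le {a b : ℝ} {k r : ℕ} (hM : M ≠ 0) (hk : k ≠ 0)
    (hab : a ≤ b) (x : Fin M → ℂ) (hx : ∀ j ∈ nearNodes (M + r * k) k (b - a),
      (ofFn M x).eval (fourierNode (M + r * k) a j : ℂ) = 0) :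
    RCLike.re (star x ⬝ᵥ prolate1D M (Icc a b) *ᵥ x) ≤
      (b - a) * (((M + r * k : ℕ) : ℝ) * (1 / 2) ^ r) ^ 2 * M * ∑ i, ‖x i‖ ^ 2 := by
  have hdeg : (ofFn M x).natDegree + r * k < M + r * k :=
    Nat.add_lt_add_right (Polynomial.ofFn_natDegree_lt (Nat.one_le_iff_ne_zero.2 hM) x) _
  have hpt : ∀ f ∈ Icc a b, ‖‖(ofFn M x).eval (𝐞 (-f) : ℂ)‖ ^ 2‖ ≤
      (((M + r * k : ℕ) : ℝ) * ((1 / 2) ^ r * ∑ i, ‖x i‖)) ^ 2 := fun f hf => by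
    rw [norm_pow, norm_norm]
    gcongr
    exact norm_eval_le_of_eval_nearNodes_eq_zero hk hf hdeg (norm_eval_ofFn_le x) hx
  have hcs : (∑ i, ‖x i‖) ^ 2 ≤ M * ∑ i, ‖x i‖ ^ 2 := by
    simpa using sq_sum_le_card_mul_sum_sq (s := Finset.univ) (f := fun i => ‖x i‖)
  have hint := norm_setIntegral_le_of_norm_le_const (μ := volume) (by simp) hpt
  rw [Real.volume_real_Icc_of_le hab] at hint
  rw [star_dotProduct_prolate1D_mulVec (by simp)]
  refine ((le_abs_self _).trans hint).trans ?_
  rw [← mul_assoc, mul_pow, mul_comm _ (b - a), ← mul_assoc, mul_assoc (_ * _) (M : ℝ)]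
  have := sub_nonneg.2 hab
  gcongr

lemma card_lt_eigenvalues_prolate1D_Icc_le {a b : ℝ} {k : ℕ} (hM : M ≠ 0) (hk : k ≠ 0)
    (hab : a ≤ b) (r : ℕ) (hA : (prolate1D M (Icc a b)).IsHermitian) :
    ((Finset.card {i | (b - a) * (((M + r * k : ℕ) : ℝ) * (1 / 2) ^ r) ^ 2 * M <
      hA.eigenvalues i} : ℕ) : ℝ) ≤ (b - a + 2 / k) * (M + r * k : ℕ) + 1 := by
  let sample : (Fin M → ℂ) →ₗ[ℂ] (nearNodes (M + r * k) k (b - a) → ℂ) :=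
    LinearMap.pi fun j => Polynomial.leval (fourierNode (M + r * k) a j : ℂ) ∘ₗ ofFn M
  have hcard := card_lt_eigenvalues_le_finrank hA sample fun x hx =>
    re_star_dotProduct_prolate1D_Icc_mulVec_le (r := r) hM hk hab x fun j hj =>
      congrFun hx ⟨j, hj⟩
  rw [Module.finrank_fintype_fun_eq_card, Fintype.card_coe] at hcard
  exact (mod_cast hcard : (_ : ℝ) ≤ _).trans (card_nearNodes_le _ _ (sub_nonneg.2 hab))

end Prolate1D

section Asymptotics

open Filter Topology

lemma exists_ne_zero_add_two_div_mul_lt {ℓ ρ : ℝ} (h : ℓ < ρ) :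
    ∃ k : ℕ, k ≠ 0 ∧ (ℓ + 2 / k) * (1 + 1 / k) < ρ := by
  have hlim : Tendsto (fun k : ℕ => (ℓ + 2 / (k : ℝ)) * (1 + 1 / k)) atTop
      (𝓝 ((ℓ + 0) * (1 + 0))) :=
    ((tendsto_const_div_atTop_nhds_zero_nat 2).const_add ℓ).mul
      ((tendsto_const_div_atTop_nhds_zero_nat 1).const_add 1)
  rw [add_zero, add_zero, mul_one] at hlim
  exact ((eventually_ne_atTop 0).and (hlim.eventually_lt_const h)).exists

lemma half_pow_div_sq_le_exp (M q : ℕ) : (((1 / 2 : ℝ) ^ (M / q)) ^ 2) ≤ exp (1 - M / q) := by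
  have hquot : (M / q : ℝ) < (M / q : ℕ) + 1 := by
    rw [← Nat.floor_div_eq_div (K := ℝ)]
    exact Nat.lt_floor_add_one _
  calc ((1 / 2 : ℝ) ^ (M / q)) ^ 2 = (1 / 4) ^ (M / q) := by
        rw [← pow_mul', pow_mul]
        norm_num
    _ ≤ (exp (-1)) ^ (M / q) := by
      gcongr
      rw [exp_neg, ← one_div]
      gcongr
      linarith [exp_one_lt_d9]
    _ = exp (-(M / q : ℕ)) := by rw [← exp_nat_mul, mul_neg_one]
    _ ≤ exp (1 - M / q) := by gcongr; linarith

lemma eventually_mul_pow_mul_exp_neg_le (C : ℝ) (n : ℕ) {c d : ℝ} (hcd : c < d) :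
    ∀ᶠ M : ℕ in atTop, C * (M : ℝ) ^ n * exp (-d * M) ≤ exp (-c * M) := by
  have hlittle := ((isLittleO_pow_exp_pos_mul_atTop n (sub_pos.2 hcd)).const_mul_left C).bound
    one_pos
  filter_upwards [tendsto_natCast_atTop_atTop.eventually hlittle] with M hM
  rw [one_mul, norm_of_nonneg (exp_pos _).le] at hM
  calc C * (M : ℝ) ^ n * exp (-d * M) ≤ exp ((d - c) * M) * exp (-d * M) := by
        gcongr
        exact (le_abs_self _).trans hM
    _ = exp (-c * M) := by rw [← exp_add]; ring_nf

lemma natCast_add_div_mul_le (M : ℕ) {k : ℕ} (hk : k ≠ 0) :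
    ((M + M / (k * k) * k : ℕ) : ℝ) ≤ (1 + 1 / k) * M := by
  have hdiv : ((M / (k * k) : ℕ) : ℝ) ≤ M / (k * k) := by exact_mod_cast Nat.cast_div_le
  calc ((M + M / (k * k) * k : ℕ) : ℝ) ≤ M + M / (k * k) * k := by push_cast; gcongr
    _ = (1 + 1 / k) * M := by field_simp

lemma mul_natCast_mul_half_pow_sq_le (M : ℕ) {k : ℕ} {ℓ : ℝ} (hk : k ≠ 0) (hℓ : 0 ≤ ℓ) :
    ℓ * (((M + M / (k * k) * k : ℕ) : ℝ) * (1 / 2) ^ (M / (k * k))) ^ 2 * M ≤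
      4 * exp 1 * ℓ * (M : ℝ) ^ 3 * exp (-(1 / (k * k)) * M) := by
  have hL : ((M + M / (k * k) * k : ℕ) : ℝ) ≤ 2 * M := by
    have hk1 : 1 / (k : ℝ) ≤ 1 := by simpa using Nat.cast_inv_le_one (α := ℝ) k
    exact (natCast_add_div_mul_le M hk).trans (by gcongr; linarith)
  have hdecay := half_pow_div_sq_le_exp M (k * k)
  rw [mul_pow]
  calc ℓ * (((M + M / (k * k) * k : ℕ) : ℝ) ^ 2 * ((1 / 2) ^ (M / (k * k))) ^ 2) * M
      ≤ ℓ * ((2 * M) ^ 2 * exp (1 - M / (k * k : ℕ))) * M := by gcongr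
    _ = 4 * exp 1 * ℓ * (M : ℝ) ^ 3 * exp (-(1 / (k * k)) * M) := by
      rw [sub_eq_add_neg, exp_add]
      push_cast
      ring_nf

-- The number of Dirichlet kernel factors in `card_lt_eigenvalues_prolate1D_Icc_le` is taken to be
-- `r = ⌊M / k²⌋`, which increases the number of nodes only by the factor `1 + 1 / k`.
lemma eventually_card_lt_eigenvalues_prolate1D_Icc_le {a b ρ : ℝ} (hab : a ≤ b) (hρ : b - a < ρ) :
    ∃ c > 0, ∀ᶠ M : ℕ in atTop,
      (Finset.card {i | exp (-c * M) < (isHermitian_prolate1D M (Icc a b)).eigenvalues i} : ℝ) ≤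
        ρ * M := by
  obtain ⟨k, hk, hkρ⟩ := exists_ne_zero_add_two_div_mul_lt hρ
  have hsmall := eventually_mul_pow_mul_exp_neg_le (4 * exp 1 * (b - a)) 3
    (half_lt_self (by positivity : (0 : ℝ) < 1 / (k * k)))
  have hlinear : ∀ᶠ M : ℕ in atTop, 1 ≤ (ρ - (b - a + 2 / k) * (1 + 1 / k)) * M :=
    (tendsto_natCast_atTop_atTop.const_mul_atTop (sub_pos.2 hkρ)).eventually_ge_atTop 1
  refine ⟨1 / (k * k) / 2, by positivity, ?_⟩
  filter_upwards [hsmall, hlinear, eventually_ne_atTop 0] with M hsmall hlinear hM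
  have hL := natCast_add_div_mul_le M hk
  have hlevel := (mul_natCast_mul_half_pow_sq_le M hk (sub_nonneg.2 hab)).trans hsmall
  calc (Finset.card _ : ℝ) ≤ Finset.card {i |
          (b - a) * (((M + M / (k * k) * k : ℕ) : ℝ) * (1 / 2) ^ (M / (k * k))) ^ 2 * M <
            (isHermitian_prolate1D M (Icc a b)).eigenvalues i} := by
        gcongr
    _ ≤ (b - a + 2 / k) * (M + M / (k * k) * k : ℕ) + 1 :=
      card_lt_eigenvalues_prolate1D_Icc_le hM hk hab _ _
    _ ≤ (b - a + 2 / k) * ((1 + 1 / k) * M) + 1 := by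
      have := sub_nonneg.2 hab
      gcongr
    _ ≤ ρ * M := by linarith

end Asymptotics

section Prolate2D

lemma card_lt_eigenvalues_prolate2D_Icc_prod_Icc_le {M N K : ℕ} {a₀ b₀ a₁ b₁ α β η : ℝ}
    (hK₀ : b₀ - a₀ ≤ K) (hK₁ : b₁ - a₁ ≤ K) (hα : K * α ≤ η) (hβ : K * β ≤ η)
    (hA : (prolate2D M N (Icc a₀ b₀ ×ˢ Icc a₁ b₁)).IsHermitian) :
    Finset.card {i | η < hA.eigenvalues i} ≤
      Finset.card {i | α < (isHermitian_prolate1D M (Icc a₀ b₀)).eigenvalues i} *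
        Finset.card {j | β < (isHermitian_prolate1D N (Icc a₁ b₁)).eigenvalues j} := by
  revert hA
  rw [prolate2D_prod]
  exact fun hA => card_lt_eigenvalues_kronecker_le (posSemidef_prolate1D M (by simp))
    (posSemidef_prolate1D N (by simp)) hA (eigenvalues_prolate1D_Icc_le hK₀ _)
    (eigenvalues_prolate1D_Icc_le hK₁ _) hα hβ

open Filter in
lemma exists_card_lt_eigenvalues_prolate2D_Icc_prod_Icc_le {a₀ b₀ a₁ b₁ ρ₀ ρ₁ : ℝ} (h₀ : a₀ ≤ b₀)
    (h₁ : a₁ ≤ b₁) (hρ₀ : b₀ - a₀ < ρ₀) (hρ₁ : b₁ - a₁ < ρ₁) :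
    ∃ (C c : ℝ) (M₀ N₀ : ℕ), 0 < C ∧ 0 < c ∧ 1 ≤ M₀ ∧ 1 ≤ N₀ ∧
      ∀ M N : ℕ, M₀ ≤ M → N₀ ≤ N →
        ∀ hA : (prolate2D M N (Icc a₀ b₀ ×ˢ Icc a₁ b₁)).IsHermitian,
          (Finset.card {i | C * exp (-c * min (M : ℝ) N) < hA.eigenvalues i} : ℝ) ≤
            ρ₀ * M * (ρ₁ * N) := by
  obtain ⟨c₀, hc₀, hev₀⟩ := eventually_card_lt_eigenvalues_prolate1D_Icc_le h₀ hρ₀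
  obtain ⟨c₁, hc₁, hev₁⟩ := eventually_card_lt_eigenvalues_prolate1D_Icc_le h₁ hρ₁
  obtain ⟨M₀, hM₀⟩ := eventually_atTop.1 (hev₀.and (eventually_ge_atTop 1))
  obtain ⟨N₀, hN₀⟩ := eventually_atTop.1 (hev₁.and (eventually_ge_atTop 1))
  obtain ⟨K, hK⟩ := exists_nat_ge (max 1 (max (b₀ - a₀) (b₁ - a₁)))
  simp only [max_le_iff] at hK
  refine ⟨K, min c₀ c₁, M₀, N₀, by linarith, lt_min hc₀ hc₁, (hM₀ M₀ le_rfl).2, (hN₀ N₀ le_rfl).2,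
    fun M N hM hN hA => ?_⟩
  have hα : K * exp (-c₀ * M) ≤ K * exp (-min c₀ c₁ * min (M : ℝ) N) := by
    simp only [neg_mul]
    gcongr <;> exact min_le_left _ _
  have hβ : K * exp (-c₁ * N) ≤ K * exp (-min c₀ c₁ * min (M : ℝ) N) := by
    simp only [neg_mul]
    gcongr <;> exact min_le_right _ _
  have hcard := card_lt_eigenvalues_prolate2D_Icc_prod_Icc_le hK.2.1 hK.2.2 hα hβ hA
  refine (Nat.cast_le.2 hcard).trans ?_
  rw [Nat.cast_mul]
  exact mul_le_mul (hM₀ M hM).1 (hN₀ N hN).1 (Nat.cast_nonneg _)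
    ((Nat.cast_nonneg _).trans (hM₀ M hM).1)

lemma apply_le_of_card_lt_comp_equiv_le {ι α : Type*} [Fintype ι] [LinearOrder α] {n : ℕ}
    {μ : Fin n → α} (hμ : Antitone μ) (e : ι ≃ Fin n) {η : α} {p : Fin n}
    (hp : Finset.card {i | η < (μ ∘ e) i} ≤ p) : μ p ≤ η := by
  have hcard : Finset.card {i | η < (μ ∘ e) i} = Finset.card {q | η < μ q} :=
    Finset.card_equiv e (by simp)
  rw [hcard] at hp
  exact not_lt.1 fun h => hp.not_gt ((Tuple.lt_card_gt_iff_apply_gt_of_antitone hμ).2 h)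

theorem prolate2D_eigenvalue_cluster_near_zero_general
    {a₀ b₀ a₁ b₁ ε : ℝ} (h₀ : a₀ < b₀) (h₁ : a₁ < b₁) (hε : 0 < ε) :
    ∃ (C c : ℝ) (M₀ N₀ : ℕ), 0 < C ∧ 0 < c ∧ 1 ≤ M₀ ∧ 1 ≤ N₀ ∧
      ∀ M N : ℕ, M₀ ≤ M → N₀ ≤ N →
        ∀ (hA : (prolate2D M N (Icc a₀ b₀ ×ˢ Icc a₁ b₁)).IsHermitian) (μ : Fin (M * N) → ℝ),
          Antitone μ → (∃ e : (Fin M × Fin N) ≃ Fin (M * N), hA.eigenvalues = μ ∘ e) →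
          ∀ p : Fin (M * N), ⌈(M : ℝ) * N * (b₀ - a₀) * (b₁ - a₁) * (1 + ε)⌉₊ ≤ (p : ℕ) →
            μ p ≤ C * exp (-c * min (M : ℝ) N) := by
  have hlt : ∀ {ℓ : ℝ}, 0 < ℓ → ℓ < ℓ * √(1 + ε) := fun hℓ =>
    lt_mul_of_one_lt_right hℓ (Real.lt_sqrt_of_sq_lt (by linarith))
  obtain ⟨C, c, M₀, N₀, hC, hc, hM₀, hN₀, hcard⟩ :=
    exists_card_lt_eigenvalues_prolate2D_Icc_prod_Icc_le h₀.le h₁.le (hlt (sub_pos.2 h₀))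
      (hlt (sub_pos.2 h₁))
  refine ⟨C, c, M₀, N₀, hC, hc, hM₀, hN₀, fun M N hM hN hA μ hμ ⟨e, he⟩ p hp => ?_⟩
  refine apply_le_of_card_lt_comp_equiv_le hμ e (he ▸ ?_)
  have hsqrt : √(1 + ε) * √(1 + ε) = 1 + ε := Real.mul_self_sqrt (by linarith)
  have hthreshold : (b₀ - a₀) * √(1 + ε) * M * ((b₁ - a₁) * √(1 + ε) * N) =
      M * N * (b₀ - a₀) * (b₁ - a₁) * (1 + ε) := by
    linear_combination (b₀ - a₀) * (b₁ - a₁) * M * N * hsqrt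
  exact_mod_cast (hcard M N hM hN hA).trans (hthreshold.trans_le (Nat.ceil_le.1 hp))

end Prolate2D

theorem prolate2D_eigenvalue_cluster_near_zero
    (W0 W1 : ℝ) (hW0 : W0 ∈ Set.Ioo (0 : ℝ) (1 / 2)) (hW1 : W1 ∈ Set.Ioo (0 : ℝ) (1 / 2))
    (ε : ℝ) (hε : ε ∈ Set.Ioo (0 : ℝ) (1 / (4 * W0 * W1) - 1)) :
    ∃ (Cbar₃ Cbar₄ : ℝ) (Mbar₂ Nbar₂ : ℕ), 0 < Cbar₃ ∧ 0 < Cbar₄ ∧ 1 ≤ Mbar₂ ∧ 1 ≤ Nbar₂ ∧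
      ∀ (M N : ℕ), Mbar₂ ≤ M → Nbar₂ ≤ N →
        ∀ (hA : (prolate2D M N (Set.Icc (-W0) W0 ×ˢ Set.Icc (-W1) W1)).IsHermitian)
          (μ : Fin (M * N) → ℝ),
          Antitone μ →
          (∃ e : (Fin M × Fin N) ≃ Fin (M * N), hA.eigenvalues = μ ∘ e) →
          ∀ p : Fin (M * N), ⌈4 * (M : ℝ) * (N : ℝ) * W0 * W1 * (1 + ε)⌉₊ ≤ (p : ℕ) →
            μ p ≤ Cbar₃ * Real.exp (-Cbar₄ * min (M : ℝ) (N : ℝ)) := by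
  obtain ⟨C, c, M₀, N₀, hC, hc, hM₀, hN₀, hcluster⟩ :=
    prolate2D_eigenvalue_cluster_near_zero_general (neg_lt_self hW0.1) (neg_lt_self hW1.1) hε.1
  exact ⟨C, c, M₀, N₀, hC, hc, hM₀, hN₀, fun M N hM hN hA μ hμ he p hp =>
    hcluster M N hM hN hA μ hμ he p (by convert hp using 2; ring)⟩
end

section
/- Let M, N ≥ 1 and let 𝕎 ⊆ [−1/2, 1/2]² be a measurable set whose Lebesgue measure ‖𝕎‖ satisfies 0 < ‖𝕎‖ and whose complement in [−1/2, 1/2]² has positive Lebesgue measure. Then every eigenvalue of B_{(M,N),𝕎} satisfies 0 < λ_{(M,N),𝕎}^{(p)} < 1 for all 0 ≤ p ≤ MN−1, and the eigenvalues sum to Σ_{p=0}^{MN−1} λ_{(M,N),𝕎}^{(p)} = MN·‖𝕎‖. -/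
open MeasureTheory Matrix Real Set

/-!
The matrix `prolate2D M N S` is the Gram matrix in `L²(S)` of the exponentials
`exp (-2πi (m f + n g))`. A nontrivial trigonometric polynomial vanishes only on a null set (it is
analytic in one variable, and Fubini does the rest), so the exponentials remain linearly independent
on any set of positive measure, where the prolate matrix is therefore positive definite. Over a full
period square they are orthonormal, so `1 - prolate2D M N 𝕎` is the prolate matrix of the complement
of `𝕎`, again positive definite: the eigenvalues lie strictly between `0` and `1`. The diagonal
entries are all equal to the measure of `𝕎`, which gives the trace.
-/

open scoped ComplexConjugate FourierTransform ENNReal ComplexOrder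

/-- A finite family of scalar functions is *almost everywhere linearly independent* if every
nontrivial linear combination is nonzero almost everywhere. Unlike linear independence of the
classes modulo null sets, this passes to every restriction of the measure. -/
def AELinearIndependent {ι α : Type*} (𝕜 : Type*) [Fintype ι] [RCLike 𝕜] [MeasurableSpace α]
    (μ : Measure α) (φ : ι → α → 𝕜) : Prop :=
  ∀ c : ι → 𝕜, c ≠ 0 → ∀ᵐ x ∂μ, ∑ i, c i * φ i x ≠ 0

namespace AELinearIndependent

variable {ι κ α β 𝕜 : Type*} [Fintype ι] [Fintype κ] [RCLike 𝕜] [MeasurableSpace α]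
  [MeasurableSpace β] {μ ν : Measure α} {φ : ι → α → 𝕜}

lemma mono_ac (hφ : AELinearIndependent 𝕜 μ φ) (hνμ : ν ≪ μ) : AELinearIndependent 𝕜 ν φ :=
  fun c hc ↦ hνμ.ae_le (hφ c hc)

lemma prod {ρ : Measure β} [SFinite ρ] {ψ : κ → β → 𝕜} (hφ : AELinearIndependent 𝕜 μ φ)
    (hψ : AELinearIndependent 𝕜 ρ ψ) (hφm : ∀ i, Measurable (φ i)) (hψm : ∀ j, Measurable (ψ j)) :
    AELinearIndependent 𝕜 (μ.prod ρ) fun (p : ι × κ) (x : α × β) ↦ φ p.1 x.1 * ψ p.2 x.2 := by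
  intro c hc
  obtain ⟨⟨i₀, j₀⟩, hc₀⟩ := Function.ne_iff.1 hc
  have hmeas : MeasurableSet {x : α × β | ∑ p : ι × κ, c p * (φ p.1 x.1 * ψ p.2 x.2) ≠ 0} :=
    (measurableSet_singleton 0).compl.preimage (by fun_prop)
  rw [Measure.ae_prod_iff_ae_ae hmeas]
  have hcol : ∀ᵐ x ∂μ, ∑ i, c (i, j₀) * φ i x ≠ 0 :=
    hφ (fun i ↦ c (i, j₀)) (Function.ne_iff.2 ⟨i₀, hc₀⟩)
  filter_upwards [hcol] with x hx
  filter_upwards [hψ (fun j ↦ ∑ i, c (i, j) * φ i x) (Function.ne_iff.2 ⟨j₀, hx⟩)] with y hy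
  simpa only [Fintype.sum_prod_type_right, Finset.sum_mul, mul_assoc] using hy

lemma linearIndependent_toLp [NeZero μ] {p : ℝ≥0∞} (hφ : AELinearIndependent 𝕜 μ φ)
    (hφp : ∀ i, MemLp (φ i) p μ) :
    LinearIndependent 𝕜 fun i ↦ (hφp i).toLp (φ i) := by
  rw [Fintype.linearIndependent_iff]
  intro c hc
  by_contra! hne
  have hcoe : ⇑(∑ i, c i • (hφp i).toLp (φ i)) =ᵐ[μ] fun x ↦ ∑ i, c i * φ i x := by
    have hterm : ∀ᵐ x ∂μ, ∀ i, (c i • (hφp i).toLp (φ i)) x = c i * φ i x := by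
      refine ae_all_iff.2 fun i ↦ ?_
      filter_upwards [Lp.coeFn_smul (c i) ((hφp i).toLp (φ i)), (hφp i).coeFn_toLp] with x hs hx
      rw [hs, Pi.smul_apply, hx, smul_eq_mul]
    filter_upwards [Lp.coeFn_finsetSum Finset.univ fun i ↦ c i • (hφp i).toLp (φ i), hterm]
      with x hsum hx
    rw [hsum, Finset.sum_apply]
    exact Finset.sum_congr rfl fun i _ ↦ hx i
  rw [hc] at hcoe
  obtain ⟨x, hx, hsum, hzero⟩ :=
    ((hφ c (Function.ne_iff.2 hne)).and (hcoe.and (Lp.coeFn_zero 𝕜 p μ))).exists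
  exact hx (hsum.symm.trans hzero)

end AELinearIndependent

lemma gram_toLp_apply {ι α 𝕜 : Type*} [RCLike 𝕜] [MeasurableSpace α] {μ : Measure α}
    {φ : ι → α → 𝕜} (hφ : ∀ i, MemLp (φ i) 2 μ) (i j : ι) :
    gram 𝕜 (fun i ↦ (hφ i).toLp (φ i)) i j = ∫ x, conj (φ i x) * φ j x ∂μ := by
  rw [gram_apply, L2.inner_def]
  refine integral_congr_ae ?_
  filter_upwards [(hφ i).coeFn_toLp, (hφ j).coeFn_toLp] with x hi hj
  rw [hi, hj, RCLike.inner_apply']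

lemma eigenvalues_lt_of_posDef_smul_one_sub {n 𝕜 : Type*} [Fintype n] [DecidableEq n] [RCLike 𝕜]
    {A : Matrix n n 𝕜} (hA : A.IsHermitian) {c : ℝ} (hc : (c • (1 : Matrix n n 𝕜) - A).PosDef)
    (i : n) : hA.eigenvalues i < c := by
  set v : n → 𝕜 := ⇑(hA.eigenvectorBasis i) with hv
  have hnorm : star v ⬝ᵥ v = 1 := by
    rw [hv, dotProduct_comm, ← EuclideanSpace.inner_eq_star_dotProduct, inner_self_eq_norm_sq_to_K]
    simp
  have hv₀ : v ≠ 0 := fun h ↦ by simp [h] at hnorm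
  have hquad := hc.re_dotProduct_pos hv₀
  rw [sub_mulVec, dotProduct_sub, map_sub, ← hA.eigenvalues_eq] at hquad
  simpa [smul_mulVec, hnorm, RCLike.smul_re] using hquad

lemma linearIndependent_fourierChar_mul {ι : Type*} {a : ι → ℝ} (ha : Function.Injective a) :
    LinearIndependent ℂ fun i (t : ℝ) ↦ (𝐞 (a i * t) : ℂ) := by
  let e : AddChar ℝ ℂ := Circle.coeHom.compAddChar 𝐞
  have he : e.IsPrimitive := .of_ne_one fun h ↦ fourierChar_ne_one <|
    Circle.coeHom.compAddChar_injective_right Circle.coe_injective h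
  exact (linearIndependent_monoidHom (Multiplicative ℝ) ℂ).comp
    (fun i ↦ (e.mulShift (a i)).toMonoidHom)
    ((AddChar.toMonoidHomEquiv.injective.comp (AddChar.to_mulShift_inj_of_isPrimitive he)).comp ha)

lemma analyticOnNhd_fourierChar_mul (α : ℝ) :
    AnalyticOnNhd ℝ (fun t : ℝ ↦ (𝐞 (α * t) : ℂ)) univ := by
  simp only [fourierChar_apply]
  intro t _
  have harg : AnalyticAt ℝ (fun t : ℝ ↦ ((2 * π * (α * t) : ℝ) : ℂ) * Complex.I) t :=
    ((Complex.ofRealCLM.analyticAt _).comp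
      (analyticAt_const.mul (analyticAt_const.mul analyticAt_id))).mul analyticAt_const
  exact analyticAt_cexp.restrictScalars.comp harg

lemma aelinearIndependent_fourierChar_mul {ι : Type*} [Fintype ι] {a : ι → ℝ}
    (ha : Function.Injective a) :
    AELinearIndependent ℂ volume fun i (t : ℝ) ↦ (𝐞 (a i * t) : ℂ) := by
  intro c hc
  have hanalytic : AnalyticOnNhd ℝ (fun t : ℝ ↦ ∑ i, c i * (𝐞 (a i * t) : ℂ)) univ :=
    Finset.univ.analyticOnNhd_fun_sum fun i _ ↦
      analyticOnNhd_const.mul (analyticOnNhd_fourierChar_mul (a i))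
  obtain ⟨t, ht⟩ : ∃ t : ℝ, ∑ i, c i * (𝐞 (a i * t) : ℂ) ≠ 0 := by
    by_contra! hzero
    refine hc (funext (Fintype.linearIndependent_iff.1 (linearIndependent_fourierChar_mul ha) c ?_))
    ext t
    simpa using hzero t
  rw [← Measure.restrict_univ (μ := volume)]
  exact ae_restrict_le_codiscreteWithin .univ (hanalytic.preimage_zero_mem_codiscrete ht)

lemma setIntegral_Icc_fourierChar_int_mul (a : ℝ) (k : ℤ) :
    ∫ t in Icc a (a + 1), (𝐞 (k * t) : ℂ) = if k = 0 then 1 else 0 := by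
  rw [integral_Icc_eq_integral_Ioc, ← intervalIntegral.integral_of_le (by linarith)]
  split_ifs with hk
  · simp [hk]
  have hk' : 2 * π * Complex.I * k ≠ 0 :=
    mul_ne_zero Complex.two_pi_I_ne_zero (Int.cast_ne_zero.2 hk)
  have hexp (t : ℝ) : (𝐞 (k * t) : ℂ) = Complex.exp (2 * π * Complex.I * k * t) := by
    rw [fourierChar_apply]
    push_cast
    ring_nf
  have hperiod : (𝐞 (k * (a + 1)) : ℂ) = 𝐞 (k * a) := by
    simp only [hexp]
    rw [Complex.exp_eq_exp_iff_exists_int]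
    exact ⟨k, by push_cast; ring⟩
  simp only [hexp] at hperiod ⊢
  rw [integral_exp_mul_complex hk', hperiod, sub_self, zero_div]

/-- The two-dimensional exponential `(f, g) ↦ exp (-2πi (m f + n g))`, whose Gram matrix in
`L²(𝕎)` is the prolate matrix. The sign matches an inner product that is conjugate-linear in its
first argument. -/
noncomputable def prolateMode {M N : ℕ} (i : Fin M × Fin N) (x : ℝ × ℝ) : ℂ :=
  𝐞 (-(i.1 : ℝ) * x.1) * 𝐞 (-(i.2 : ℝ) * x.2)

section Prolate

variable {M N : ℕ}

lemma continuous_prolateMode (i : Fin M × Fin N) : Continuous (prolateMode i) := by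
  unfold prolateMode
  fun_prop

lemma norm_prolateMode (i : Fin M × Fin N) (x : ℝ × ℝ) : ‖prolateMode i x‖ = 1 := by
  rw [prolateMode, norm_mul, Circle.norm_coe, Circle.norm_coe, mul_one]

lemma memLp_prolateMode (μ : Measure (ℝ × ℝ)) [IsFiniteMeasure μ] (p : ℝ≥0∞) (i : Fin M × Fin N) :
    MemLp (prolateMode i) p μ :=
  .of_bound (continuous_prolateMode i).aestronglyMeasurable 1
    (.of_forall fun x ↦ (norm_prolateMode i x).le)

lemma aelinearIndependent_prolateMode :
    AELinearIndependent ℂ volume (prolateMode : Fin M × Fin N → ℝ × ℝ → ℂ) := by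
  have hfactor (K : ℕ) : AELinearIndependent ℂ volume fun (k : Fin K) (t : ℝ) ↦
      (𝐞 (-(k : ℝ) * t) : ℂ) :=
    aelinearIndependent_fourierChar_mul fun _ _ h ↦ Fin.ext (Nat.cast_injective (neg_injective h))
  have hmeas (α : ℝ) : Measurable fun t : ℝ ↦ (𝐞 (α * t) : ℂ) := by fun_prop
  have hprod := (hfactor M).prod (hfactor N) (fun _ ↦ hmeas _) (fun _ ↦ hmeas _)
  rwa [← Measure.volume_eq_prod] at hprod

lemma conj_prolateMode_mul_prolateMode (i j : Fin M × Fin N) (x : ℝ × ℝ) :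
    conj (prolateMode i x) * prolateMode j x =
      𝐞 (((i.1 : ℤ) - j.1 : ℤ) * x.1) * 𝐞 (((i.2 : ℤ) - j.2 : ℤ) * x.2) := by
  simp only [prolateMode, map_mul, Circle.starRingEnd_addChar]
  rw [mul_mul_mul_comm, ← Circle.coe_mul, ← Circle.coe_mul, ← AddChar.map_add_eq_mul,
    ← AddChar.map_add_eq_mul]
  push_cast
  ring_nf

lemma prolate2D_apply (S : Set (ℝ × ℝ)) (i j : Fin M × Fin N) :
    prolate2D M N S i j = ∫ x in S, conj (prolateMode i x) * prolateMode j x := by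
  unfold prolate2D
  congr with x
  rw [conj_prolateMode_mul_prolateMode, fourierChar_apply, fourierChar_apply, ← Complex.exp_add]
  push_cast
  ring_nf

lemma prolate2D_eq_gram {S : Set (ℝ × ℝ)} [IsFiniteMeasure (volume.restrict S)] :
    prolate2D M N S =
      gram ℂ fun i ↦ (memLp_prolateMode (volume.restrict S) 2 i).toLp (prolateMode i) := by
  ext i j
  rw [prolate2D_apply, gram_toLp_apply]

lemma posDef_prolate2D {S : Set (ℝ × ℝ)} (hS₀ : volume S ≠ 0) (hS : volume S ≠ ∞) :
    (prolate2D M N S).PosDef := by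
  have : IsFiniteMeasure (volume.restrict S) := isFiniteMeasure_restrict.2 hS
  have : NeZero (volume.restrict S) := ⟨mt Measure.restrict_eq_zero.1 hS₀⟩
  rw [prolate2D_eq_gram]
  exact posDef_gram_of_linearIndependent <|
    (aelinearIndependent_prolateMode.mono_ac
      Measure.absolutelyContinuous_restrict).linearIndependent_toLp _

lemma prolate2D_sdiff {S T : Set (ℝ × ℝ)} (hS : NullMeasurableSet S) (hST : S ⊆ T)
    (hT : volume T ≠ ∞) : prolate2D M N (T \ S) = prolate2D M N T - prolate2D M N S := by
  have : IsFiniteMeasure (volume.restrict T) := isFiniteMeasure_restrict.2 hT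
  ext i j
  have hint : IntegrableOn (fun x ↦ conj (prolateMode i x) * prolateMode j x) T :=
    (memLp_prolateMode _ 2 i).star.integrable_mul (memLp_prolateMode _ 2 j)
  simp only [Matrix.sub_apply, prolate2D_apply, setIntegral_sdiff₀ hS hint hST]

lemma prolate2D_Icc_prod_Icc (a b : ℝ) :
    prolate2D M N (Icc a (a + 1) ×ˢ Icc b (b + 1)) = 1 := by
  ext i j
  simp only [prolate2D_apply, conj_prolateMode_mul_prolateMode]
  rw [Measure.volume_eq_prod,
    setIntegral_prod_mul (fun f : ℝ ↦ (𝐞 (((i.1 : ℤ) - j.1 : ℤ) * f) : ℂ))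
      (fun g : ℝ ↦ (𝐞 (((i.2 : ℤ) - j.2 : ℤ) * g) : ℂ)),
    setIntegral_Icc_fourierChar_int_mul, setIntegral_Icc_fourierChar_int_mul]
  simp [one_apply, sub_eq_zero, Prod.ext_iff, Fin.ext_iff, ← ite_and, and_comm]

lemma trace_prolate2D (S : Set (ℝ × ℝ)) :
    (prolate2D M N S).trace = ((M * N * volume.real S : ℝ) : ℂ) := by
  simp [trace, prolate2D]

lemma sum_eigenvalues_prolate2D {S : Set (ℝ × ℝ)} (hA : (prolate2D M N S).IsHermitian) :
    ∑ i, hA.eigenvalues i = M * N * volume.real S := by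
  refine Complex.ofReal_injective ?_
  rw [← trace_prolate2D, hA.trace_eq_sum_eigenvalues, Complex.ofReal_sum]
  rfl

lemma eigenvalues_prolate2D_mem_Ioo {S : Set (ℝ × ℝ)} {a b : ℝ} (hS : NullMeasurableSet S)
    (hsub : S ⊆ Icc a (a + 1) ×ˢ Icc b (b + 1)) (hpos : volume S ≠ 0)
    (hcompl : volume ((Icc a (a + 1) ×ˢ Icc b (b + 1)) \ S) ≠ 0)
    (hA : (prolate2D M N S).IsHermitian) (i : Fin M × Fin N) : hA.eigenvalues i ∈ Ioo 0 1 := by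
  have hsquare : volume (Icc a (a + 1) ×ˢ Icc b (b + 1)) ≠ ∞ :=
    (isCompact_Icc.prod isCompact_Icc).measure_ne_top
  have hcomplPosDef : ((1 : ℝ) • (1 : Matrix _ _ ℂ) - prolate2D M N S).PosDef := by
    rw [one_smul, ← prolate2D_Icc_prod_Icc a b, ← prolate2D_sdiff hS hsub hsquare]
    exact posDef_prolate2D hcompl (measure_ne_top_of_subset sdiff_subset hsquare)
  exact ⟨(posDef_prolate2D hpos (measure_ne_top_of_subset hsub hsquare)).eigenvalues_pos i,
    eigenvalues_lt_of_posDef_smul_one_sub hA hcomplPosDef i⟩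

end Prolate

theorem prolate2D_eigenvalue_bounds_and_trace
    (M N : ℕ) (hM : 1 ≤ M) (hN : 1 ≤ N)
    (𝕎 : Set (ℝ × ℝ)) (hmeas : MeasurableSet 𝕎)
    (hsub : 𝕎 ⊆ Set.Icc (-(1 / 2) : ℝ) (1 / 2) ×ˢ Set.Icc (-(1 / 2) : ℝ) (1 / 2))
    (hpos : 0 < (volume 𝕎).toReal)
    (hcomp : 0 < (volume ((Set.Icc (-(1 / 2) : ℝ) (1 / 2) ×ˢ
        Set.Icc (-(1 / 2) : ℝ) (1 / 2)) \ 𝕎)).toReal)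
    (hA : (prolate2D M N 𝕎).IsHermitian)
    (μ : Fin (M * N) → ℝ) (hμ : Antitone μ)
    (hperm : ∃ e : (Fin M × Fin N) ≃ Fin (M * N), hA.eigenvalues = μ ∘ e) :
    (∀ p : Fin (M * N), 0 < μ p ∧ μ p < 1) ∧
      (∑ p : Fin (M * N), μ p) = (M : ℝ) * (N : ℝ) * (volume 𝕎).toReal := by
  obtain ⟨e, he⟩ := hperm
  have hμ_eq (i : Fin M × Fin N) : μ (e i) = hA.eigenvalues i := congrFun he.symm i
  have hhalf : (-(1 / 2) : ℝ) + 1 = 1 / 2 := by norm_num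
  constructor
  · refine e.surjective.forall.2 fun i ↦ ?_
    rw [hμ_eq]
    exact eigenvalues_prolate2D_mem_Ioo (a := -(1 / 2)) (b := -(1 / 2)) hmeas.nullMeasurableSet
      (by rwa [hhalf]) (ENNReal.toReal_pos_iff.1 hpos).1.ne'
      (by rw [hhalf]; exact (ENNReal.toReal_pos_iff.1 hcomp).1.ne') hA i
  · calc ∑ p, μ p = ∑ i, hA.eigenvalues i := by simp_rw [← e.sum_comp μ, hμ_eq]
      _ = M * N * (volume 𝕎).toReal := sum_eigenvalues_prolate2D hA
end

section
/- For every half-bandwidth W ∈ (0, 1/2) and every N ≥ 2, the squared Frobenius norm of the prolate matrix satisfies ‖B_{N,W}‖_F² ≥ 2NW − (2/π²)·(2N−1)/(N−1) − (2/π²)·log(N−1). -/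
open MeasureTheory Matrix Real Set

/-- The real symmetric prolate matrix `B_{N,W}` with entries
`sin(2πW(m−n))/(π(m−n))` off the diagonal and `2W` on the diagonal. -/
noncomputable def prolateR (N : ℕ) (W : ℝ) : Matrix (Fin N) (Fin N) ℝ :=
  fun m n => if m = n then 2 * W
    else Real.sin (2 * Real.pi * W * (((m : ℕ) : ℝ) - ((n : ℕ) : ℝ))) /
      (Real.pi * (((m : ℕ) : ℝ) - ((n : ℕ) : ℝ)))

/-!
The squared Frobenius norm of a Toeplitz matrix is a Fejér-type sum `∑ (N - |k|) t(k)²` of its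
kernel `t`. For the prolate kernel, extending that sum to all `k` with constant weight `N` gives
`2NW` by Parseval's identity, here an evaluation of the second Bernoulli polynomial. Since
`t(k)² ≤ 1 / (πk)²`, the terms `|k| ≥ N` contribute at most `2N / (π²(N - 1))`, and the weights
`|k|` at most `2 / π²` times a harmonic number.

For `W` outside `[0, 1/2]` the kernel has total energy `x² + {x}(1 - {x})` with `x = 2W`, and this
is still at least `x` because `x(1 - x) ≤ {x}(1 - {x})`.
-/

section ToeplitzSum

variable {M : Type*} [AddCommMonoid M]

lemma sum_range_sum_range_sub_add_nsmul_zero (f : ℤ → M) (N : ℕ) :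
    ∑ m ∈ Finset.range N, ∑ n ∈ Finset.range N, f (m - n) + N • f 0 =
      ∑ k ∈ Finset.range N, (N - k) • (f k + f (-k)) := by
  induction N with
  | zero => simp
  | succ N ih =>
    have last_row : ∑ n ∈ Finset.range N, f (N - n) + f 0 = ∑ k ∈ Finset.range (N + 1), f k := by
      rw [← Finset.sum_flip, Finset.sum_range_succ, Nat.sub_self, Nat.cast_zero]
      congr 1
      refine Finset.sum_congr rfl fun n hn => ?_
      rw [Nat.cast_sub (Finset.mem_range.1 hn).le]
    have last_column : ∑ m ∈ Finset.range N, f (m - N) + f 0 =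
        ∑ k ∈ Finset.range (N + 1), f (-k) := by
      rw [← Finset.sum_flip, Finset.sum_range_succ, Nat.sub_self, Nat.cast_zero, neg_zero]
      congr 1
      refine Finset.sum_congr rfl fun m hm => ?_
      rw [Nat.cast_sub (Finset.mem_range.1 hm).le, neg_sub]
    have weights : ∑ k ∈ Finset.range (N + 1), (N + 1 - k) • (f k + f (-k)) =
        ∑ k ∈ Finset.range N, (N - k) • (f k + f (-k)) +
          ∑ k ∈ Finset.range (N + 1), (f k + f (-k)) := by
      rw [Finset.sum_range_succ, Finset.sum_range_succ, ← add_assoc, ← Finset.sum_add_distrib]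
      congr 1
      · refine Finset.sum_congr rfl fun k hk => ?_
        rw [Nat.sub_add_comm (Finset.mem_range.1 hk).le, succ_nsmul]
      · simp
    rw [weights, ← ih, Finset.sum_add_distrib, ← last_row, ← last_column]
    simp only [Finset.sum_range_succ, Finset.sum_add_distrib, sub_self, succ_nsmul]
    abel

end ToeplitzSum

section InverseSquareDecay

variable {f : ℕ → ℝ} {a c : ℝ} {n : ℕ}

lemma le_sum_range_add_div_of_hasSum (hf : HasSum f a) (hc : 0 ≤ c) (hn : n ≠ 0)
    (hfc : ∀ k, n < k → f k ≤ c / (k : ℝ) ^ 2) :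
    a ≤ ∑ k ∈ Finset.range (n + 1), f k + c / n := by
  refine le_of_tendsto ((Filter.tendsto_add_atTop_iff_nat 1).2 hf.tendsto_sum_nat) ?_
  filter_upwards [Filter.eventually_ge_atTop n] with m hnm
  have tail : ∑ k ∈ Finset.Ioc n m, f k ≤ c / n :=
    calc ∑ k ∈ Finset.Ioc n m, f k
        ≤ ∑ k ∈ Finset.Ioc n m, c * ((k : ℝ) ^ 2)⁻¹ :=
          Finset.sum_le_sum fun k hk => hfc k (Finset.mem_Ioc.1 hk).1
      _ ≤ c * ((n : ℝ)⁻¹ - (m : ℝ)⁻¹) := by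
          rw [← Finset.mul_sum]
          exact mul_le_mul_of_nonneg_left (sum_Ioc_inv_sq_le_sub hn hnm) hc
      _ ≤ c / n := mul_le_mul_of_nonneg_left (sub_le_self _ (by positivity)) hc
  rw [← Finset.sum_range_add_sum_Ico f (Nat.succ_le_succ hnm), Nat.succ_eq_add_one,
    Nat.succ_eq_add_one, Finset.Ico_add_one_add_one_eq_Ioc]
  gcongr

lemma sum_range_mul_le_mul_one_add_log (hc : 0 ≤ c)
    (hfc : ∀ k, k ≠ 0 → f k ≤ c / (k : ℝ) ^ 2) :
    ∑ k ∈ Finset.range (n + 1), (k : ℝ) * f k ≤ c * (1 + log n) := by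
  have hterm (k : ℕ) : ((k + 1 : ℕ) : ℝ) * f (k + 1) ≤ c * ((k + 1 : ℕ) : ℝ)⁻¹ :=
    calc ((k + 1 : ℕ) : ℝ) * f (k + 1)
        ≤ ((k + 1 : ℕ) : ℝ) * (c / ((k + 1 : ℕ) : ℝ) ^ 2) :=
          mul_le_mul_of_nonneg_left (hfc _ k.succ_ne_zero) (Nat.cast_nonneg _)
      _ = c * ((k + 1 : ℕ) : ℝ)⁻¹ := by field_simp
  calc ∑ k ∈ Finset.range (n + 1), (k : ℝ) * f k
      = ∑ k ∈ Finset.range n, ((k + 1 : ℕ) : ℝ) * f (k + 1) := by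
        rw [Finset.sum_range_succ', Nat.cast_zero, zero_mul, add_zero]
    _ ≤ ∑ k ∈ Finset.range n, c * ((k + 1 : ℕ) : ℝ)⁻¹ := Finset.sum_le_sum fun k _ => hterm k
    _ = c * harmonic n := by rw [← Finset.mul_sum, harmonic]; push_cast; rfl
    _ ≤ c * (1 + log n) := mul_le_mul_of_nonneg_left (harmonic_le_one_add_log n) hc

lemma le_sum_range_sub_mul_of_hasSum (hf : HasSum f a) (hc : 0 ≤ c) (hn : n ≠ 0)
    (hfc : ∀ k, k ≠ 0 → f k ≤ c / (k : ℝ) ^ 2) :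
    (n + 1) * a - c * ((2 * n + 1) / n + log n) ≤
      ∑ k ∈ Finset.range (n + 1), ((n + 1 : ℝ) - k) * f k := by
  have tail := le_sum_range_add_div_of_hasSum hf hc hn fun k hk => hfc k (by lia)
  have head := sum_range_mul_le_mul_one_add_log (n := n) hc hfc
  calc (n + 1) * a - c * ((2 * n + 1) / n + log n)
      = (n + 1) * (a - c / n) - c * (1 + log n) := by field_simp; ring
    _ ≤ (n + 1) * ∑ k ∈ Finset.range (n + 1), f k - ∑ k ∈ Finset.range (n + 1), (k : ℝ) * f k := by
        gcongr
        linarith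
    _ = ∑ k ∈ Finset.range (n + 1), ((n + 1 : ℝ) - k) * f k := by
        rw [Finset.mul_sum, ← Finset.sum_sub_distrib]
        simp only [sub_mul]

end InverseSquareDecay

section SineSeries

open Polynomial in
lemma polynomial_bernoulli_two : Polynomial.bernoulli 2 = X ^ 2 - X + C 6⁻¹ := by
  simp [Polynomial.bernoulli, Finset.sum_range_succ, neg_div, sub_eq_add_neg, ← X_pow_eq_monomial]

lemma hasSum_cos_two_pi_mul_div_sq (x : ℝ) :
    HasSum (fun k : ℕ => cos (2 * π * k * x) / (k : ℝ) ^ 2)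
      (π ^ 2 * (1 / 6 - Int.fract x * (1 - Int.fract x))) := by
  have cos_fract (k : ℕ) : cos (2 * π * k * Int.fract x) = cos (2 * π * k * x) := by
    rw [← cos_sub_int_mul_two_pi (2 * π * k * x) (k * ⌊x⌋), Int.fract]
    push_cast
    ring_nf
  convert hasSum_one_div_nat_pow_mul_cos one_ne_zero
    ⟨Int.fract_nonneg x, (Int.fract_lt_one x).le⟩ using 1
  · funext k
    rw [cos_fract, mul_one, one_div_mul_eq_div]
  · simp only [polynomial_bernoulli_two, mul_one, Nat.factorial_two, Nat.cast_ofNat,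
      Polynomial.map_add, Polynomial.map_sub, Polynomial.map_pow, Polynomial.map_X,
      Polynomial.map_C, Polynomial.eval_add, Polynomial.eval_sub, Polynomial.eval_pow,
      Polynomial.eval_X, Polynomial.eval_C, map_inv₀, map_ofNat]
    ring

lemma hasSum_sin_pi_mul_sq_div_sq (x : ℝ) :
    HasSum (fun k : ℕ => sin (π * k * x) ^ 2 / (k : ℝ) ^ 2)
      (π ^ 2 * (Int.fract x * (1 - Int.fract x)) / 2) := by
  have value : π ^ 2 * (Int.fract x * (1 - Int.fract x)) / 2 =
      (π ^ 2 / 6 - π ^ 2 * (1 / 6 - Int.fract x * (1 - Int.fract x))) / 2 := by ring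
  rw [value]
  refine ((hasSum_zeta_two.sub (hasSum_cos_two_pi_mul_div_sq x)).div_const 2).congr_fun fun k => ?_
  rw [sin_sq_eq_half_sub]
  ring_nf

lemma mul_one_sub_le_fract_mul_one_sub_fract (x : ℝ) :
    x * (1 - x) ≤ Int.fract x * (1 - Int.fract x) := by
  have hx := Int.floor_add_fract x
  have hnonneg := Int.fract_nonneg x
  have hlt := Int.fract_lt_one x
  suffices 0 ≤ (⌊x⌋ : ℝ) * (2 * Int.fract x + (⌊x⌋ - 1)) by
    rw [← hx, Int.fract_intCast_add, Int.fract_fract]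
    linarith
  rcases le_or_gt ⌊x⌋ (-1) with hneg | hge
  · have : (⌊x⌋ : ℝ) ≤ -1 := by exact_mod_cast hneg
    nlinarith
  rcases (show 0 ≤ ⌊x⌋ by lia).eq_or_lt with hzero | hpos
  · simp [← hzero]
  · have : (1 : ℝ) ≤ ⌊x⌋ := by exact_mod_cast hpos
    nlinarith

end SineSeries

/-- The kernel `k ↦ sin(2πWk)/(πk)` of the Toeplitz matrix `prolateR N W`, written with `sinc` so
that it takes the value `2W` at `k = 0`. -/
noncomputable def prolateKernel (W : ℝ) (k : ℤ) : ℝ :=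
  2 * W * sinc (2 * π * W * k)

section ProlateKernel

variable (W : ℝ)

@[simp]
lemma prolateKernel_zero : prolateKernel W 0 = 2 * W := by
  simp [prolateKernel]

@[simp]
lemma prolateKernel_neg (k : ℤ) : prolateKernel W (-k) = prolateKernel W k := by
  simp [prolateKernel]

lemma prolateKernel_of_ne_zero {k : ℤ} (hk : k ≠ 0) :
    prolateKernel W k = sin (2 * π * W * k) / (π * k) := by
  rcases eq_or_ne W 0 with rfl | hW
  · simp [prolateKernel]
  · have hk' : (k : ℝ) ≠ 0 := Int.cast_ne_zero.2 hk
    rw [prolateKernel, sinc_of_ne_zero (by positivity)]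
    field_simp

lemma prolateKernel_sq_le {k : ℤ} (hk : k ≠ 0) :
    prolateKernel W k ^ 2 ≤ 1 / π ^ 2 / (k : ℝ) ^ 2 := by
  rw [prolateKernel_of_ne_zero W hk, div_pow, mul_pow, div_div]
  gcongr
  exact sin_sq_le_one _

lemma hasSum_prolateKernel_sq :
    HasSum (fun k : ℕ => prolateKernel W k ^ 2)
      ((2 * W) ^ 2 + Int.fract (2 * W) * (1 - Int.fract (2 * W)) / 2) := by
  have value : Int.fract (2 * W) * (1 - Int.fract (2 * W)) / 2 =
      π ^ 2 * (Int.fract (2 * W) * (1 - Int.fract (2 * W))) / 2 / π ^ 2 := by field_simp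
  rw [value]
  refine ((hasSum_ite_eq 0 ((2 * W) ^ 2)).add
    ((hasSum_sin_pi_mul_sq_div_sq (2 * W)).div_const (π ^ 2))).congr_fun fun k => ?_
  rcases eq_or_ne k 0 with rfl | hk
  · simp
  · rw [if_neg hk, zero_add, prolateKernel_of_ne_zero W (Nat.cast_ne_zero.2 hk), div_pow,
      mul_pow, Int.cast_natCast, div_div, mul_comm ((k : ℝ) ^ 2)]
    ring_nf

lemma prolateR_apply {N : ℕ} (m n : Fin N) :
    prolateR N W m n = prolateKernel W ((m : ℕ) - (n : ℕ)) := by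
  rcases eq_or_ne m n with rfl | hmn
  · simp [prolateR]
  · have hsub : ((m : ℕ) : ℤ) - (n : ℕ) ≠ 0 := by
      rwa [sub_ne_zero, Nat.cast_injective.ne_iff, Fin.val_ne_iff]
    rw [prolateKernel_of_ne_zero W hsub, prolateR, if_neg hmn]
    push_cast
    rfl

lemma sum_prolateR_sq (N : ℕ) :
    ∑ m, ∑ n, prolateR N W m n ^ 2 =
      2 * ∑ k ∈ Finset.range N, ((N : ℝ) - k) * prolateKernel W k ^ 2 - N * (2 * W) ^ 2 := by
  have toeplitz := sum_range_sum_range_sub_add_nsmul_zero (fun k => prolateKernel W k ^ 2) N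
  simp only [Finset.sum_range, ← prolateR_apply, prolateKernel_zero, prolateKernel_neg,
    nsmul_eq_mul] at toeplitz ⊢
  rw [eq_sub_iff_add_eq, toeplitz, Finset.mul_sum]
  refine Finset.sum_congr rfl fun k _ => ?_
  rw [Nat.cast_sub k.is_lt.le]
  ring

end ProlateKernel

theorem prolate_frobenius_norm_lower_bound_general (W : ℝ) (N : ℕ) (hN : 2 ≤ N) :
    2 * (N : ℝ) * W - (2 / π ^ 2) * ((2 * (N : ℝ) - 1) / ((N : ℝ) - 1))
        - (2 / π ^ 2) * log ((N : ℝ) - 1)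
      ≤ ∑ m : Fin N, ∑ n : Fin N, (prolateR N W m n) ^ 2 := by
  obtain ⟨n, rfl⟩ : ∃ n, N = n + 1 := Nat.exists_eq_add_of_le' (by lia)
  obtain ⟨a, hsum, ha⟩ : ∃ a, HasSum (fun k : ℕ => prolateKernel W k ^ 2) a ∧ W + 2 * W ^ 2 ≤ a :=
    ⟨_, hasSum_prolateKernel_sq W, by linarith [mul_one_sub_le_fract_mul_one_sub_fract (2 * W)]⟩
  have fejer := le_sum_range_sub_mul_of_hasSum (c := 1 / π ^ 2) (n := n) hsum (by positivity)
    (by lia) fun k hk => prolateKernel_sq_le W (Nat.cast_ne_zero.2 hk)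
  rw [sum_prolateR_sq]
  push_cast
  calc 2 * ((n : ℝ) + 1) * W - 2 / π ^ 2 * ((2 * (n + 1) - 1) / (n + 1 - 1))
        - 2 / π ^ 2 * log (n + 1 - 1)
      = 2 * ((n + 1) * (W + 2 * W ^ 2) - 1 / π ^ 2 * ((2 * n + 1) / n + log n))
          - (n + 1) * (2 * W) ^ 2 := by
        rw [add_sub_cancel_right, show 2 * ((n : ℝ) + 1) - 1 = 2 * n + 1 by ring]
        ring
    _ ≤ 2 * ((n + 1) * a - 1 / π ^ 2 * ((2 * n + 1) / n + log n)) - (n + 1) * (2 * W) ^ 2 := by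
        gcongr
    _ ≤ _ := by gcongr

theorem prolate_frobenius_norm_lower_bound
    (W : ℝ) (hW : W ∈ Set.Ioo (0 : ℝ) (1 / 2)) (N : ℕ) (hN : 2 ≤ N) :
    2 * (N : ℝ) * W - (2 / Real.pi ^ 2) * ((2 * (N : ℝ) - 1) / ((N : ℝ) - 1))
        - (2 / Real.pi ^ 2) * Real.log ((N : ℝ) - 1)
      ≤ ∑ m : Fin N, ∑ n : Fin N, (prolateR N W m n) ^ 2 :=
  prolate_frobenius_norm_lower_bound_general W N hN
end
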